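/- Let n, r ∈ ℂ with n ≠ 0, n − r + 1 ≠ 0, and r not a nonpositive integer. Define y(x) = (1/(n(n−r+1)))·( −(r−1)²/4 + ( n·x − (r−1)/2 + (n(n+1)x(x−1)/r)·F(n+1, n+2, r+1, x)/F(n, n+1, r, x) )² ). Let U ⊆ ℂ be an open subset of the unit disc {|x| < 1} on which x ≠ 0, x ≠ 1, F(n, n+1, r, x) ≠ 0, and y(x) ∉ {0, 1, x}. Then y solves P_VI(0, −(r−1)²/2, (2n−r+1)²/2, 0) on U. -/

import Mathlib

/-- `y` solves the Painlevé VI equation with parameters `(α, β, γ, δ)` on `U`: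
`y` is twice differentiable on `U`, and at every `x ∈ U` we have `x ≠ 0`, `x ≠ 1`,
`y x ∉ {0, 1, x}` and the Painlevé VI equation holds. -/
def SolvesPVI (α β γ δ : ℂ) (U : Set ℂ) (y : ℂ → ℂ) : Prop :=
  (∀ x ∈ U, DifferentiableAt ℂ y x) ∧
  (∀ x ∈ U, DifferentiableAt ℂ (deriv y) x) ∧
  ∀ x ∈ U, x ≠ 0 ∧ x ≠ 1 ∧ y x ≠ 0 ∧ y x ≠ 1 ∧ y x ≠ x ∧
    deriv (deriv y) x =
      (1 / 2) * (1 / y x + 1 / (y x - 1) + 1 / (y x - x)) * (deriv y x) ^ 2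
        - (1 / x + 1 / (x - 1) + 1 / (y x - x)) * deriv y x
        + (y x * (y x - 1) * (y x - x) / (x ^ 2 * (x - 1) ^ 2)) *
            (α + β * x / (y x) ^ 2 + γ * (x - 1) / (y x - 1) ^ 2
              + δ * x * (x - 1) / (y x - x) ^ 2)

/-- The Gauss hypergeometric series `F(a, b, c, x) = Σ (a)ₙ(b)ₙ/(c)ₙ · xⁿ/n!`,
where `(a)ₙ` is the ascending Pochhammer symbol. -/
noncomputable def hypF (a b c x : ℂ) : ℂ :=
  ∑' n : ℕ,
    ((ascPochhammer ℂ n).eval a * (ascPochhammer ℂ n).eval b / (ascPochhammer ℂ n).eval c)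
      * x ^ n / (n.factorial : ℂ)

/-- The solution of Theorem 2. -/
noncomputable def yThm2 (n r : ℂ) : ℂ → ℂ := fun x =>
  (1 / (n * (n - r + 1))) *
    (-(r - 1) ^ 2 / 4 +
      (n * x - (r - 1) / 2 +
        (n * (n + 1) * x * (x - 1) / r) * hypF (n + 1) (n + 2) (r + 1) x
          / hypF n (n + 1) r x) ^ 2)

/-- The coefficients of the hypergeometric series. -/
noncomputable def hcoef (a b c : ℂ) (k : ℕ) : ℂ :=
  ((ascPochhammer ℂ k).eval a * (ascPochhammer ℂ k).eval b / (ascPochhammer ℂ k).eval c)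
    / (k.factorial : ℂ)

lemma hypF_eq (a b c x : ℂ) : hypF a b c x = ∑' k : ℕ, hcoef a b c k * x ^ k := by
  unfold hypF hcoef
  refine tsum_congr fun k => ?_
  ring

lemma poch_ne (c : ℂ) (hc : ∀ m : ℕ, c ≠ -(m : ℂ)) (k : ℕ) :
    (ascPochhammer ℂ k).eval c ≠ 0 := by
  induction k with
  | zero => simp
  | succ k ih =>
    rw [ascPochhammer_succ_eval]
    refine mul_ne_zero ih fun h => hc k (eq_neg_of_add_eq_zero_left h)

lemma poch_shift (a : ℂ) (k : ℕ) :
    (ascPochhammer ℂ (k + 1)).eval a = a * (ascPochhammer ℂ k).eval (a + 1) := by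
  rw [ascPochhammer_succ_left]
  simp

lemma hcoef_succ (a b c : ℂ) (hc : ∀ m : ℕ, c ≠ -(m : ℂ)) (k : ℕ) :
    hcoef a b c (k + 1) =
      ((a + k) / (c + k)) * ((b + k) / (1 + k)) * hcoef a b c k := by
  have h1 := poch_ne c hc k
  have h2 : c + k ≠ 0 := fun h => hc k (eq_neg_of_add_eq_zero_left h)
  have h3 : (1 + k : ℂ) ≠ 0 := by rw [add_comm]; exact Nat.cast_add_one_ne_zero k
  have h4 : (k.factorial : ℂ) ≠ 0 := by exact_mod_cast k.factorial_ne_zero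
  unfold hcoef
  rw [ascPochhammer_succ_eval, ascPochhammer_succ_eval, ascPochhammer_succ_eval,
    Nat.factorial_succ]
  push_cast
  rw [add_comm (k : ℂ) 1]
  field_simp

lemma hcoef_shift (a b c : ℂ) (hc : ∀ m : ℕ, c ≠ -(m : ℂ)) (k : ℕ) :
    ((k : ℂ) + 1) * hcoef a b c (k + 1) = a * b / c * hcoef (a + 1) (b + 1) (c + 1) k := by
  have h3 : (k + 1 : ℂ) ≠ 0 := Nat.cast_add_one_ne_zero k
  have h4 : (k.factorial : ℂ) ≠ 0 := by exact_mod_cast k.factorial_ne_zero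
  have h5 : c ≠ 0 := by simpa using hc 0
  have h6 := poch_ne c hc (k + 1)
  rw [poch_shift] at h6
  have h7 := right_ne_zero_of_mul h6
  unfold hcoef
  rw [poch_shift, poch_shift, poch_shift, Nat.factorial_succ]
  push_cast
  field_simp

lemma hcoef_summable (a b c : ℂ) (hc : ∀ m : ℕ, c ≠ -(m : ℂ)) (R : ℝ) (h0 : 0 ≤ R) (h1 : R < 1) :
    Summable fun k => ‖hcoef a b c k‖ * R ^ k := by
  have key : Filter.Tendsto (fun k : ℕ => ‖((a + k) / (c + k)) * ((b + k) / (1 + k))‖ * R)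
      Filter.atTop (nhds R) := by
    have t1 := tendsto_add_mul_div_add_mul_atTop_nhds (𝕜 := ℂ) a c 1 one_ne_zero
    have t2 := tendsto_add_mul_div_add_mul_atTop_nhds (𝕜 := ℂ) b 1 1 one_ne_zero
    have t := ((t1.mul t2).norm).mul_const R
    simpa using t
  have ev := key.eventually (gt_mem_nhds (show R < (1 + R) / 2 by linarith))
  refine summable_of_ratio_norm_eventually_le (r := (1 + R) / 2) (by linarith) ?_
  filter_upwards [ev] with k hk
  rw [hcoef_succ a b c hc, norm_mul _ (hcoef a b c k), pow_succ]
  simp only [norm_mul, norm_norm] at hk ⊢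
  have e : ‖R‖ = R := by simp [abs_of_nonneg h0]
  rw [e]
  calc _ = (‖(a + k) / (c + k)‖ * ‖(b + k) / (1 + k)‖ * R) * (‖hcoef a b c k‖ * ‖R ^ k‖) := by
        ring
    _ ≤ _ := by gcongr

lemma hypF_hasSum (a b c : ℂ) (hc : ∀ m : ℕ, c ≠ -(m : ℂ)) (x : ℂ) (hx : ‖x‖ < 1) :
    HasSum (fun k => hcoef a b c k * x ^ k) (hypF a b c x) := by
  rw [hypF_eq]
  refine (Summable.of_norm ?_).hasSum
  simpa [norm_mul, norm_pow] using hcoef_summable a b c hc ‖x‖ (norm_nonneg _) hx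

lemma hypF_deriv (a b c : ℂ) (hc : ∀ m : ℕ, c ≠ -(m : ℂ)) (x : ℂ) (hx : ‖x‖ < 1) :
    HasDerivAt (hypF a b c) (a * b / c * hypF (a + 1) (b + 1) (c + 1) x) x ∧
    HasSum (fun k : ℕ => (k : ℂ) * hcoef a b c k * x ^ k)
      (x * (a * b / c * hypF (a + 1) (b + 1) (c + 1) x)) := by
  obtain ⟨R, hxR, hR⟩ := exists_between hx
  have hR0 : 0 ≤ R := (norm_nonneg x).trans hxR.le
  have hc' : ∀ m : ℕ, c + 1 ≠ -(m : ℂ) := by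
    intro m h
    apply hc (m + 1)
    push_cast
    linear_combination h
  have hf : hypF a b c = fun w => ∑' k : ℕ, hcoef a b c k * w ^ k := funext (hypF_eq a b c)
  have hu := hcoef_summable a b c hc R hR0 hR
  have hd : ∀ k : ℕ, DifferentiableOn ℂ (fun w : ℂ => hcoef a b c k * w ^ k)
      (Metric.ball (0 : ℂ) R) := fun k => by fun_prop
  have hle : ∀ (k : ℕ) (w : ℂ), w ∈ Metric.ball (0 : ℂ) R →
      ‖hcoef a b c k * w ^ k‖ ≤ ‖hcoef a b c k‖ * R ^ k := by
    intro k w hw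
    rw [norm_mul, norm_pow]
    have : ‖w‖ ≤ R := by simpa using (mem_ball_zero_iff.1 hw).le
    gcongr
  have hxm : x ∈ Metric.ball (0 : ℂ) R := by simpa using hxR
  have hdiff := Complex.differentiableOn_tsum_of_summable_norm hu hd Metric.isOpen_ball hle
  have hsum := Complex.hasSum_deriv_of_summable_norm hu hd Metric.isOpen_ball hle hxm
  have hda : DifferentiableAt ℂ (hypF a b c) x := by
    rw [hf]; exact hdiff.differentiableAt (Metric.isOpen_ball.mem_nhds hxm)
  rw [← hf] at hsum
  have hs2 : HasSum (fun k : ℕ => ((k : ℂ) * hcoef a b c k * x ^ (k - 1)))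
      (deriv (hypF a b c) x) := by
    convert! hsum using 2 with k
    simp
    ring
  have hs3 := (hasSum_nat_add_iff' 1).2 hs2
  have hs4 : HasSum (fun k : ℕ => a * b / c * (hcoef (a + 1) (b + 1) (c + 1) k * x ^ k))
      (deriv (hypF a b c) x) := by
    convert! hs3 using 1
    · funext k
      rw [← mul_assoc, ← hcoef_shift a b c hc]; simp
    · simp
  have e := hs4.unique ((hypF_hasSum _ _ _ hc' x hx).mul_left (a * b / c))
  rw [← e]
  refine ⟨hda.hasDerivAt, ?_⟩
  convert! hs2.mul_left x using 2 with k
  rcases k with _ | k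
  · simp
  · simp [pow_succ]; ring

lemma hyp_ode (a b c : ℂ) (hc : ∀ m : ℕ, c ≠ -(m : ℂ)) (x : ℂ) (hx : ‖x‖ < 1) (G H : ℂ)
    (hG : G = a * b / c * hypF (a + 1) (b + 1) (c + 1) x)
    (hH : H = a * b / c * ((a + 1) * (b + 1) / (c + 1) *
      hypF (a + 1 + 1) (b + 1 + 1) (c + 1 + 1) x)) :
    x * (1 - x) * H + (c - (a + b + 1) * x) * G - a * b * hypF a b c x = 0 := by
  have hc' : ∀ m : ℕ, c + 1 ≠ -(m : ℂ) := by
    intro m h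
    apply hc (m + 1)
    push_cast
    linear_combination h
  have s0 := hypF_hasSum a b c hc x hx
  have s1 := (hypF_deriv a b c hc x hx).2
  have s2 := (hypF_hasSum (a + 1) (b + 1) (c + 1) hc' x hx).mul_left (a * b / c)
  have s3 := ((hypF_deriv (a + 1) (b + 1) (c + 1) hc' x hx).2).mul_left (a * b / c)
  have s4 : HasSum (fun k : ℕ => (k : ℂ) * ((k : ℂ) - 1) * hcoef a b c k * x ^ k)
      (x * (x * H)) := by
    rw [← hasSum_nat_add_iff' 1]
    convert! s3.mul_left x using 1
    · funext k
      have := hcoef_shift a b c hc k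
      push_cast
      linear_combination (k : ℂ) * x ^ (k + 1) * this
    · rw [hH, Finset.sum_range_one, Nat.cast_zero]; ring
  have tot := ((s3.add (s2.mul_left c)).sub s4).sub
    ((s1.mul_left (a + b + 1)).add (s0.mul_left (a * b)))
  have z : HasSum (fun _ : ℕ => (0 : ℂ)) 0 := hasSum_zero
  have e := tot.unique (by
    convert! z using 2 with k
    have h1 := hcoef_shift a b c hc k
    have h2 := hcoef_succ a b c hc k
    have h3 : c + k ≠ 0 := fun h => hc k (eq_neg_of_add_eq_zero_left h)
    have h4 : (1 + k : ℂ) ≠ 0 := by rw [add_comm]; exact Nat.cast_add_one_ne_zero k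
    have h5 : (c + k) * (1 + k) * hcoef a b c (k + 1) = (a + k) * (b + k) * hcoef a b c k := by
      rw [h2]; field_simp
    linear_combination x ^ k * h5 - (c + k) * x ^ k * h1)
  rw [hG]
  rw [hH] at e ⊢
  linear_combination e

/-- **Theorem 2:** `y(n, r)` solves `P_VI(0, -(r-1)²/2, (2n-r+1)²/2, 0)`. -/
theorem yThm2_solves_painleveVI (n r : ℂ) (hn : n ≠ 0) (hnr : n - r + 1 ≠ 0)
    (hr : ∀ m : ℕ, r ≠ -(m : ℂ))
    (U : Set ℂ) (hU : IsOpen U) (hUball : U ⊆ Metric.ball (0 : ℂ) 1)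
    (hreg : ∀ x ∈ U, x ≠ 0 ∧ x ≠ 1 ∧ hypF n (n + 1) r x ≠ 0 ∧
      yThm2 n r x ≠ 0 ∧ yThm2 n r x ≠ 1 ∧ yThm2 n r x ≠ x) :
    SolvesPVI 0 (-(r - 1) ^ 2 / 2) ((2 * n - r + 1) ^ 2 / 2) 0 U (yThm2 n r) := by
  have hr' : ∀ m : ℕ, r + 1 ≠ -(m : ℂ) := by
    intro m h
    apply hr (m + 1)
    push_cast
    linear_combination h
  set w : ℂ → ℂ := fun x => n * x - (r - 1) / 2 +
        (n * (n + 1) * x * (x - 1) / r) * hypF (n + 1) (n + 2) (r + 1) x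
          / hypF n (n + 1) r x with hw
  have hy : yThm2 n r = fun x => (1 / (n * (n - r + 1))) * (-(r - 1) ^ 2 / 4 + w x ^ 2) := rfl
  have hK : n * (n - r + 1) ≠ 0 := mul_ne_zero hn hnr
  have hr0 : r ≠ 0 := by simpa using hr 0
  have hwd : ∀ x ∈ U, HasDerivAt w
      (n * (n - r + 1) * (x - yThm2 n r x) / (x * (x - 1))) x := by
    intro x hx
    obtain ⟨x0, x1, hF, -⟩ := hreg x hx
    have hxb : ‖x‖ < 1 := by simpa using hUball hx
    have x1' : x - 1 ≠ 0 := sub_ne_zero.2 x1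
    have dF := (hypF_deriv n (n + 1) r hr x hxb).1
    have dG := (hypF_deriv (n + 1) (n + 2) (r + 1) hr' x hxb).1
    have ode := hyp_ode n (n + 1) r hr x hxb _ _ rfl rfl
    rw [show n + 1 + 1 = n + 2 by ring] at ode dF
    rw [show n + 1 + 1 = n + 2 by ring] at dG
    have hp : HasDerivAt (fun x : ℂ => n * (n + 1) * x * (x - 1) / r)
        (n * (n + 1) * (2 * x - 1) / r) x := by
      have := ((((hasDerivAt_id x).const_mul (n * (n + 1))).mul
        ((hasDerivAt_id x).sub_const 1)).div_const r)
      convert! this using 1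
      simp; ring
    have h := (((hasDerivAt_id x).const_mul n).sub_const ((r - 1) / 2)).add
      ((hp.mul dG).div dF hF)
    convert! h using 1
    rw [hy]
    simp only [hw, Pi.mul_apply]
    generalize hypF n (n + 1) r x = F at *
    generalize hypF (n + 1) (n + 2) (r + 1) x = G at *
    generalize hypF (n + 2) (n + 2 + 1) (r + 1 + 1) x = H at *
    have hr1 : r + 1 ≠ 0 := by simpa using hr' 0
    obtain ⟨F1, hF1⟩ : ∃ F1, F1 = n * (n + 1) / r * G := ⟨_, rfl⟩
    obtain ⟨F2, hF2⟩ : ∃ F2, F2 = n * (n + 1) / r *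
      ((n + 1) * (n + 2) / (r + 1) * H) := ⟨_, rfl⟩
    have ode2 : F2 = ((r - (2 * n + 2) * x) * F1 - n * (n + 1) * F) / (x * (x - 1)) := by
      rw [eq_div_iff (mul_ne_zero x0 x1'), hF1, hF2]
      linear_combination -ode
    trans n + (((2 * x - 1) * F1 + x * (x - 1) * F2) * F - x * (x - 1) * F1 * F1) / F ^ 2
    · have e : n * x - (r - 1) / 2 + n * (n + 1) * x * (x - 1) / r * G / F
          = n * x - (r - 1) / 2 + x * (x - 1) * F1 / F := by
        rw [hF1]; ring
      rw [e, ode2]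
      field_simp
      ring
    · rw [hF1, hF2]
      ring
  have hyd : ∀ x ∈ U, HasDerivAt (yThm2 n r)
      (2 * w x * (x - yThm2 n r x) / (x * (x - 1))) x := by
    intro x hx
    obtain ⟨x0, x1, -⟩ := hreg x hx
    have x1' : x - 1 ≠ 0 := sub_ne_zero.2 x1
    have h := (((hwd x hx).pow 2).const_add (-(r - 1) ^ 2 / 4)).const_mul
      (1 / (n * (n - r + 1)))
    convert! h using 1
    generalize yThm2 n r x = Y
    generalize w x = W
    field_simp
    simp
    ring
  have hydd : ∀ x ∈ U, HasDerivAt (deriv (yThm2 n r))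
      (((2 * (n * (n - r + 1) * (x - yThm2 n r x) / (x * (x - 1)))) * (x - yThm2 n r x)
        + 2 * w x * (1 - 2 * w x * (x - yThm2 n r x) / (x * (x - 1)))) / (x * (x - 1))
        - 2 * w x * (x - yThm2 n r x) * (2 * x - 1) / (x * (x - 1)) ^ 2) x := by
    intro x hx
    obtain ⟨x0, x1, -⟩ := hreg x hx
    have x1' : x - 1 ≠ 0 := sub_ne_zero.2 x1
    have hD : HasDerivAt (fun x : ℂ => x * (x - 1)) (2 * x - 1) x := by
      convert! (hasDerivAt_id x).mul ((hasDerivAt_id x).sub_const 1) using 1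
      simp; ring
    have h := (((hwd x hx).const_mul 2).mul ((hasDerivAt_id x).sub (hyd x hx))).div hD
      (mul_ne_zero x0 x1')
    have hev : deriv (yThm2 n r) =ᶠ[nhds x]
        fun x => 2 * w x * (x - yThm2 n r x) / (x * (x - 1)) := by
      filter_upwards [hU.mem_nhds hx] with z hz
      exact (hyd z hz).deriv
    refine HasDerivAt.congr_of_eventuallyEq ?_ hev
    convert! h using 1
    simp only [Pi.mul_apply, Pi.sub_apply, id]
    field_simp
  refine ⟨fun x hx => (hyd x hx).differentiableAt, fun x hx => (hydd x hx).differentiableAt,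
    fun x hx => ?_⟩
  obtain ⟨x0, x1, -, y0, y1, yx⟩ := hreg x hx
  refine ⟨x0, x1, y0, y1, yx, ?_⟩
  rw [(hydd x hx).deriv, (hyd x hx).deriv]
  have hrel : w x ^ 2 = n * (n - r + 1) * yThm2 n r x + (r - 1) ^ 2 / 4 := by
    rw [hy]; field_simp; ring
  generalize yThm2 n r x = Y at *
  generalize w x = W at *
  have x1' : x - 1 ≠ 0 := sub_ne_zero.2 x1
  have y1' : Y - 1 ≠ 0 := sub_ne_zero.2 y1
  have yx' : Y - x ≠ 0 := sub_ne_zero.2 yx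
  linear_combination (norm := skip) (-4 * (x - Y) / (x * (x - 1)) ^ 2
    - 2 * (1 / Y + 1 / (Y - 1) + 1 / (Y - x)) * (x - Y) ^ 2 / (x * (x - 1)) ^ 2) * hrel
  field_simp
  ring
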